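/- Let A ∈ ℝ^{m×n} and B ∈ ℝ^{l×n} with B injective, and let p ∈ [1,2). Then ‖A‖_{p↦1;B} ≤ (1/2)·min over (v,w) ∈ K of ( ‖v‖_1 + ‖w‖_∞ ) ≤ √(π/2)·l^{1/p − 1/2}·‖A‖_{p↦1;B}. -/

import Mathlib

/-!
The first inequality is weak duality: testing the positive semidefinite block matrix on
`(sign (A z), z)` gives `2 ‖A z‖₁ ≤ ‖v‖₁ + ‖w‖_∞ ‖B z‖₂²`, and `‖B z‖₂ ≤ ‖B z‖_p ≤ 1`.

For the second inequality put `M = A (Bᵀ B)⁻¹ Aᵀ` and `G = l^(1/p - 1/2) ‖A‖_{p↦1;B}`. Since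
`‖x‖_p ≤ l^(1/p - 1/2) ‖x‖₂`, one has `‖A z‖₁ ≤ G ‖B z‖₂`, which amounts to `sᵀ M s ≤ G²` for all
`s ∈ [-1,1]^m`. Completing the square (a Schur complement) shows that `(v / c, c · 1) ∈ K` as soon
as `M ≤ Diag v` and `c > 0`. It therefore suffices to find `v ≥ 0` with `M ≤ Diag v` and
`∑ vᵢ ≤ (π/2) G²`, and to let `c` be (a perturbation of) `√(π/2) G`.

The existence of `v` (`exists_diag`) is the dual form of Nesterov's `π/2` theorem: separating
the open negative orthant from the convex cone `{(T Xᵢᵢ - tr (M X))ᵢ : X ≥ 0}`, where `T = (π/2) G²`,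
reduces it to `tr (M X) ≤ T maxᵢ Xᵢᵢ` for `X ≥ 0`. Enlarging the diagonal and scaling, `X` may be
taken to be the Gram matrix of unit vectors `aᵢ`. For a standard Gaussian vector `g`, put
`gᵢ = ⟪aᵢ, g⟫`, `sᵢ = sign gᵢ` and `c = √(2/π)`. Then `E[sᵢ gⱼ] = c Xᵢⱼ` and `E[gᵢ gⱼ] = Xᵢⱼ`, so
taking expectations in `(s - c g)ᵀ M (s - c g) ≥ 0` yields `(2/π) tr (M X) ≤ E[sᵀ M s] ≤ G²`
(`gaussian_rounding`).
-/

open Matrix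
open scoped ENNReal

/-- The vector `p`-norm on `ℝ^k`, for `p ∈ [1,∞]` (given as an element of `ℝ≥0∞`). -/
noncomputable def pNorm {k : ℕ} (p : ℝ≥0∞) (x : Fin k → ℝ) : ℝ :=
  if p = ∞ then ⨆ i, |x i| else (∑ i, |x i| ^ p.toReal) ^ (1 / p.toReal)

/-- The generalized matrix `p ↦ q ; B`-norm: `‖A‖_{p↦q;B} = sup { ‖A v‖_q : ‖B v‖_p ≤ 1 }`. -/
noncomputable def gnorm {m n l : ℕ} (A : Matrix (Fin m) (Fin n) ℝ)
    (B : Matrix (Fin l) (Fin n) ℝ) (p q : ℝ≥0∞) : ℝ :=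
  sSup {r : ℝ | ∃ v : Fin n → ℝ, pNorm p (B.mulVec v) ≤ 1 ∧ r = pNorm q (A.mulVec v)}

/-- `γ_s`, the `s`-th root of the `s`-th absolute moment of a standard Gaussian random
variable: `γ_s = (2^{s/2} Γ((s+1)/2) / √π)^{1/s}`. -/
noncomputable def gam (s : ℝ) : ℝ :=
  ((2 : ℝ) ^ (s / 2) * Real.Gamma ((s + 1) / 2) / Real.sqrt Real.pi) ^ (1 / s)

/-- The feasible set `K`: pairs `(v, w)` such that the block matrix
`[[Diag v, −A], [−Aᵀ, Bᵀ Diag w B]]` is positive semidefinite. -/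
def Kset {m n l : ℕ} (A : Matrix (Fin m) (Fin n) ℝ) (B : Matrix (Fin l) (Fin n) ℝ) :
    Set ((Fin m → ℝ) × (Fin l → ℝ)) :=
  {vw | (fromBlocks (diagonal vw.1) (-A) (-Aᵀ) (Bᵀ * diagonal vw.2 * B)).PosSemidef}

/-! ### Gaussian rounding -/

section Gaussian

open MeasureTheory ProbabilityTheory
open scoped RealInnerProductSpace

theorem integral_abs_gaussianReal :
    ∫ x, |x| ∂(gaussianReal 0 1) = Real.sqrt (2 / Real.pi) := by
  rw [integral_gaussianReal_eq_integral_smul one_ne_zero]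
  have h1 : ∀ x : ℝ, gaussianPDFReal 0 1 x • |x|
      = (fun t : ℝ ↦ (Real.sqrt (2 * Real.pi))⁻¹ * (t ^ (1:ℝ) * Real.exp (-(1/2) * t ^ (2:ℝ)))) |x| := by
    intro x
    simp only [gaussianPDFReal, smul_eq_mul, Real.rpow_one, Real.rpow_two, sq_abs, NNReal.coe_one,
      mul_one, sub_zero]
    rw [show -(1/2) * x ^ 2 = -x ^ 2 / 2 by ring]
    ring
  simp_rw [h1]
  refine (integral_comp_abs (f := fun t : ℝ ↦
    (Real.sqrt (2 * Real.pi))⁻¹ * (t ^ (1:ℝ) * Real.exp (-(1/2) * t ^ (2:ℝ))))).trans ?_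
  rw [integral_const_mul,
    integral_rpow_mul_exp_neg_mul_rpow (by norm_num) (by norm_num) (by norm_num)]
  rw [Real.sqrt_mul (by norm_num), Real.sqrt_div (by norm_num)]
  have := Real.sqrt_pos.2 Real.pi_pos
  have h2 : Real.sqrt 2 * Real.sqrt 2 = 2 := Real.mul_self_sqrt (by norm_num)
  have h3 : (0:ℝ) < Real.sqrt 2 := by positivity
  norm_num [Real.rpow_neg_one]
  field_simp
  nlinarith

variable {E : Type*} [NormedAddCommGroup E] [InnerProductSpace ℝ E] [FiniteDimensional ℝ E]
  [MeasurableSpace E] [BorelSpace E]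

theorem memLp_inner (a : E) : MemLp (fun x : E ↦ ⟪a, x⟫) 2 (stdGaussian E) :=
  (IsGaussian.memLp_two_id (μ := stdGaussian E)).const_inner a

theorem integral_inner_mul_inner (a b : E) :
    ∫ x, ⟪a, x⟫ * ⟪b, x⟫ ∂(stdGaussian E) = ⟪a, b⟫ := by
  have h := covarianceBilin_apply_eq_cov (IsGaussian.memLp_two_id (μ := stdGaussian E)) a b
  rw [covarianceBilin_stdGaussian, innerSL_apply_apply, covariance] at h
  have h0 : ∀ c : E, ∫ x, ⟪c, x⟫ ∂(stdGaussian E) = 0 := fun c ↦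
    integral_strongDual_stdGaussian (innerSL ℝ c)
  simp only [h0, sub_zero] at h
  exact h.symm

theorem map_inner_stdGaussian (a : E) (ha : ‖a‖ = 1) :
    (stdGaussian E).map (fun x ↦ ⟪a, x⟫) = gaussianReal 0 1 := by
  have h := IsGaussian.map_eq_gaussianReal (μ := stdGaussian E) (innerSL ℝ a)
  rw [integral_strongDual_stdGaussian, variance_dual_stdGaussian, innerSL_apply_norm, ha] at h
  simpa using h

theorem integral_abs_inner (a : E) (ha : ‖a‖ = 1) :
    ∫ x, |⟪a, x⟫| ∂(stdGaussian E) = Real.sqrt (2 / Real.pi) := by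
  rw [← integral_abs_gaussianReal, ← map_inner_stdGaussian a ha,
    integral_map (by fun_prop) (by fun_prop)]

theorem measurable_realSign : Measurable Real.sign := by
  unfold Real.sign
  exact Measurable.ite measurableSet_Iio measurable_const
    (Measurable.ite measurableSet_Ioi measurable_const measurable_const)

theorem abs_realSign_le (x : ℝ) : |Real.sign x| ≤ 1 := by
  rcases Real.sign_apply_eq x with h | h | h <;> simp [h]

theorem realSign_mul_self (x : ℝ) : Real.sign x * x = |x| := by
  rcases lt_trichotomy x 0 with h | h | h
  · rw [Real.sign_of_neg h, abs_of_neg h]; ring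
  · simp [h]
  · rw [Real.sign_of_pos h, abs_of_pos h]; ring

theorem integrable_sign_mul (a b : E) :
    Integrable (fun x : E ↦ Real.sign ⟪a, x⟫ * ⟪b, x⟫) (stdGaussian E) := by
  refine Integrable.bdd_mul (c := 1) ((memLp_inner b).integrable (by norm_num)) ?_ ?_
  · exact (measurable_realSign.comp (by fun_prop)).aestronglyMeasurable
  · exact Filter.Eventually.of_forall fun x ↦ abs_realSign_le _

/-- The reflection `R` in the line spanned by `a` preserves the Gaussian measure and the sign of
`⟪a, x⟫`, and averaging the integrand over `x` and `R x` leaves `⟪a, b⟫ * |⟪a, x⟫|`. -/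
theorem integral_sign_mul (a b : E) (ha : ‖a‖ = 1) :
    ∫ x, Real.sign ⟪a, x⟫ * ⟪b, x⟫ ∂(stdGaussian E) = Real.sqrt (2 / Real.pi) * ⟪a, b⟫ := by
  set R : E ≃ₗᵢ[ℝ] E := (ℝ ∙ a).reflection
  have hR : ∀ x, R x = (2 * ⟪a, x⟫) • a - x := by
    intro x
    have := Submodule.reflection_singleton_apply (𝕜 := ℝ) a x
    simp only [R, this, ha]
    simp [two_mul, add_smul, two_smul]
  have h1 : ∫ x, Real.sign ⟪a, x⟫ * ⟪b, x⟫ ∂(stdGaussian E)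
      = ∫ x, Real.sign ⟪a, R x⟫ * ⟪b, R x⟫ ∂(stdGaussian E) := by
    conv_lhs => rw [← stdGaussian_map R]
    rw [integral_map (by fun_prop)]
    exact ((measurable_realSign.comp (by fun_prop)).mul (by fun_prop)).aestronglyMeasurable
  have h2 : ∀ x, Real.sign ⟪a, R x⟫ * ⟪b, R x⟫
      = (2 * ⟪a, b⟫) * |⟪a, x⟫| - Real.sign ⟪a, x⟫ * ⟪b, x⟫ := by
    intro x
    have haa : ⟪a, a⟫ = 1 := by rw [real_inner_self_eq_norm_sq, ha]; norm_num
    have e1 : ⟪a, R x⟫ = ⟪a, x⟫ := by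
      rw [hR, inner_sub_right, inner_smul_right, haa]; ring
    have e3 : Real.sign ⟪a, x⟫ * ⟪a, x⟫ = |⟪a, x⟫| := realSign_mul_self _
    rw [e1, hR, inner_sub_right, inner_smul_right, real_inner_comm a b, ← e3]
    ring
  have hi : Integrable (fun x : E ↦ |⟪a, x⟫|) (stdGaussian E) :=
    ((memLp_inner a).integrable (by norm_num)).abs
  simp_rw [h2] at h1
  rw [integral_sub (hi.const_mul _) (integrable_sign_mul a b), integral_const_mul,
    integral_abs_inner a ha] at h1
  linarith

/-- Nesterov's rounding bound for the Gram matrix of unit vectors `a i`: the integral of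
`(s - c g)ᵀ M (s - c g) ≥ 0` with `g i = ⟪a i, x⟫`, `s i = sign (g i)` and `c = √(2/π)`. -/
theorem gaussian_rounding {m : ℕ} (M : Matrix (Fin m) (Fin m) ℝ) (hM : M.PosSemidef) (S : ℝ)
    (hS : ∀ s : Fin m → ℝ, (∀ i, |s i| ≤ 1) → s ⬝ᵥ M *ᵥ s ≤ S)
    (a : Fin m → E) (ha : ∀ i, ‖a i‖ = 1) :
    ∑ i, ∑ j, M i j * ⟪a i, a j⟫ ≤ Real.pi / 2 * S := by
  set c := Real.sqrt (2 / Real.pi)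
  have hc : c * c = 2 / Real.pi := Real.mul_self_sqrt (by positivity)
  -- `∑ i, ∑ j, F x i j` is `sᵀ M s - (s - c g)ᵀ M (s - c g)`, so that `sᵀ M s` itself need not be
  -- integrated
  set F : E → Fin m → Fin m → ℝ := fun x i j ↦ M i j *
    (c * (Real.sign ⟪a i, x⟫ * ⟪a j, x⟫) + c * (Real.sign ⟪a j, x⟫ * ⟪a i, x⟫)
      - c * c * (⟪a i, x⟫ * ⟪a j, x⟫)) with hF
  have hint : ∀ i j, Integrable (fun x ↦ c * (Real.sign ⟪a i, x⟫ * ⟪a j, x⟫)) (stdGaussian E) :=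
    fun i j ↦ (integrable_sign_mul _ _).const_mul _
  have hint2 : ∀ i j, Integrable (fun x ↦ c * c * (⟪a i, x⟫ * ⟪a j, x⟫)) (stdGaussian E) :=
    fun i j ↦ ((memLp_inner (a i)).integrable_mul (memLp_inner (a j))).const_mul _
  have hFi : ∀ i j, Integrable (fun x ↦ F x i j) (stdGaussian E) := fun i j ↦
    (((hint i j).add (hint j i)).sub (hint2 i j)).const_mul _
  have hsign : ∀ i j, ∫ x, Real.sign ⟪a i, x⟫ * ⟪a j, x⟫ ∂(stdGaussian E) = c * ⟪a i, a j⟫ :=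
    fun i j ↦ integral_sign_mul _ _ (ha i)
  have hFint : ∫ x, ∑ i, ∑ j, F x i j ∂(stdGaussian E)
      = 2 / Real.pi * ∑ i, ∑ j, M i j * ⟪a i, a j⟫ := by
    rw [integral_finsetSum _ (fun i _ ↦ integrable_finsetSum _ (fun j _ ↦ hFi i j)), Finset.mul_sum]
    refine Finset.sum_congr rfl fun i _ ↦ ?_
    rw [integral_finsetSum _ (fun j _ ↦ hFi i j), Finset.mul_sum]
    refine Finset.sum_congr rfl fun j _ ↦ ?_
    simp only [hF]
    rw [integral_const_mul]
    refine (congrArg (M i j * ·) (integral_sub ((hint i j).add (hint j i)) (hint2 i j))).trans ?_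
    simp only [Pi.add_apply]
    rw [integral_add (hint i j) (hint j i), integral_const_mul, integral_const_mul,
      integral_const_mul, hsign, hsign, integral_inner_mul_inner, real_inner_comm (a i) (a j), ← hc]
    ring
  have hle : ∀ x, ∑ i, ∑ j, F x i j ≤ S := by
    intro x
    have h1 := hS (fun i ↦ Real.sign ⟪a i, x⟫) (fun i ↦ abs_realSign_le _)
    have h2 := hM.dotProduct_mulVec_nonneg (fun i ↦ Real.sign ⟪a i, x⟫ - c * ⟪a i, x⟫)
    refine le_trans ?_ h1
    rw [← sub_nonneg]
    refine le_trans h2 (le_of_eq ?_)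
    simp only [dotProduct, mulVec, Pi.star_apply, star_trivial, Finset.mul_sum,
      ← Finset.sum_sub_distrib]
    refine Finset.sum_congr rfl fun i _ ↦ Finset.sum_congr rfl fun j _ ↦ ?_
    simp only [hF]
    ring
  have hfin : 2 / Real.pi * ∑ i, ∑ j, M i j * ⟪a i, a j⟫ ≤ S := by
    rw [← hFint]
    calc _ ≤ ∫ x : E, S ∂(stdGaussian E) :=
          integral_mono (integrable_finsetSum _ fun i _ ↦ integrable_finsetSum _ fun j _ ↦ hFi i j)
            (integrable_const _) hle
      _ = S := by simp
  have hpi := Real.pi_pos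
  calc _ = Real.pi / 2 * (2 / Real.pi * ∑ i, ∑ j, M i j * ⟪a i, a j⟫) := by field_simp
    _ ≤ _ := by gcongr

open scoped MatrixOrder in
theorem psd_unit_diag {m : ℕ} (M X : Matrix (Fin m) (Fin m) ℝ) (hM : M.PosSemidef)
    (hX : X.PosSemidef) (hX1 : ∀ i, X i i = 1) (S : ℝ)
    (hS : ∀ s : Fin m → ℝ, (∀ i, |s i| ≤ 1) → s ⬝ᵥ M *ᵥ s ≤ S) :
    ∑ i, ∑ j, M i j * X i j ≤ Real.pi / 2 * S := by
  set N := CFC.sqrt X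
  have hNN : N * N = X := CFC.sqrt_mul_sqrt_self X hX.nonneg
  have hN : ∀ i j, N i j = N j i := fun i j ↦ by
    have : IsSelfAdjoint N := (CFC.sqrt_nonneg X).isSelfAdjoint
    have := congrFun (congrFun this.star_eq j) i
    simpa using this
  set a : Fin m → EuclideanSpace ℝ (Fin m) := fun i ↦ WithLp.toLp 2 (N i)
  have hin : ∀ i j, ⟪a i, a j⟫ = X i j := by
    intro i j
    rw [← hNN, Matrix.mul_apply]
    simp only [a, PiLp.inner_apply, RCLike.inner_apply, conj_trivial]
    refine Finset.sum_congr rfl fun k _ ↦ ?_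
    rw [hN j k, mul_comm]
  have hn : ∀ i, ‖a i‖ = 1 := by
    intro i
    have := hin i i
    rw [real_inner_self_eq_norm_sq, hX1] at this
    nlinarith [norm_nonneg (a i)]
  simpa only [hin] using gaussian_rounding M hM S hS a hn

/-- Filling up the diagonal of `X` to the constant `R` can only increase `tr (M X)`, which reduces
the bound to matrices of unit diagonal. -/
theorem psd_diag_le {m : ℕ} (M X : Matrix (Fin m) (Fin m) ℝ) (hM : M.PosSemidef)
    (hX : X.PosSemidef) {R : ℝ} (hR : 0 < R) (hX1 : ∀ i, X i i ≤ R) (S : ℝ)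
    (hS : ∀ s : Fin m → ℝ, (∀ i, |s i| ≤ 1) → s ⬝ᵥ M *ᵥ s ≤ S) :
    ∑ i, ∑ j, M i j * X i j ≤ Real.pi / 2 * S * R := by
  have hD : (diagonal fun i ↦ R - X i i).PosSemidef :=
    PosSemidef.diagonal fun i ↦ sub_nonneg.2 (hX1 i)
  have h := psd_unit_diag M (R⁻¹ • (X + diagonal fun i ↦ R - X i i)) hM
    ((hX.add hD).smul (by positivity)) (fun i ↦ by simp [hR.ne']) S hS
  have h2 : ∑ i, ∑ j, M i j * (R⁻¹ • (X + diagonal fun i ↦ R - X i i)) i j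
      = R⁻¹ * (∑ i, ∑ j, M i j * X i j + ∑ i, M i i * (R - X i i)) := by
    rw [← Finset.sum_add_distrib, Finset.mul_sum]
    refine Finset.sum_congr rfl fun i _ ↦ ?_
    simp only [Matrix.smul_apply, Matrix.add_apply, smul_eq_mul, diagonal_apply, mul_add,
      Finset.sum_add_distrib, mul_ite, mul_zero, Finset.sum_ite_eq, Finset.mem_univ, if_true,
      Finset.mul_sum]
    congr 1
    · exact Finset.sum_congr rfl fun j _ ↦ by ring
    · ring
  have h3 : 0 ≤ ∑ i, M i i * (R - X i i) :=
    Finset.sum_nonneg fun i _ ↦ mul_nonneg hM.diag_nonneg (sub_nonneg.2 (hX1 i))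
  rw [h2, inv_mul_le_iff₀ hR] at h
  linarith

end Gaussian

/-! ### Dual certificate by separation -/

/-- Dual form of Nesterov's `π/2` theorem: if `sᵀ M s ≤ S` on the cube, then `M` is dominated by a
diagonal matrix of trace at most `(π/2) S`. -/
theorem exists_diag {m : ℕ} (M : Matrix (Fin m) (Fin m) ℝ) (hM : M.PosSemidef) (S : ℝ)
    (hS : ∀ s : Fin m → ℝ, (∀ i, |s i| ≤ 1) → s ⬝ᵥ M *ᵥ s ≤ S) :
    ∃ v : Fin m → ℝ, (∀ i, 0 ≤ v i) ∧ ∑ i, v i ≤ Real.pi / 2 * S ∧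
      ∀ y : Fin m → ℝ, y ⬝ᵥ M *ᵥ y ≤ ∑ i, v i * y i ^ 2 := by
  have hS0 : 0 ≤ S := by simpa using hS 0 (by simp)
  rcases Nat.eq_zero_or_pos m with rfl | hm
  · refine ⟨0, by simp, ?_, by simp⟩
    simp only [Finset.univ_eq_empty, Finset.sum_empty]
    positivity
  have : Nonempty (Fin m) := ⟨⟨0, hm⟩⟩
  set T := Real.pi / 2 * S with hT
  have hT0 : 0 ≤ T := by positivity
  let L : Matrix (Fin m) (Fin m) ℝ →ₗ[ℝ] (Fin m → ℝ) :=
    { toFun := fun X i ↦ T * X i i - ∑ k, ∑ j, M k j * X k j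
      map_add' := fun X Y ↦ by
        ext i
        simp only [Matrix.add_apply, mul_add, Finset.sum_add_distrib, Pi.add_apply]
        ring
      map_smul' := fun r X ↦ by
        ext i
        simp only [Matrix.smul_apply, smul_eq_mul, Pi.smul_apply, RingHom.id_apply, mul_sub,
          Finset.mul_sum]
        congr 1
        · ring
        · exact Finset.sum_congr rfl fun k _ ↦ Finset.sum_congr rfl fun j _ ↦ by ring }
  have hL : ∀ X i, L X i = T * X i i - ∑ k, ∑ j, M k j * X k j := fun _ _ ↦ rfl
  set N : Set (Fin m → ℝ) := Set.univ.pi fun _ ↦ Set.Iio 0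
  have hmemN : ∀ f : Fin m → ℝ, f ∈ N ↔ ∀ i, f i < 0 := fun f ↦ by simp [N]
  set P : Set (Matrix (Fin m) (Fin m) ℝ) := {X | X.PosSemidef}
  have hPconv : Convex ℝ P := by
    intro X hX Y hY a b ha hb _
    exact (PosSemidef.smul hX ha).add (PosSemidef.smul hY hb)
  have hdisj : Disjoint N (Set.image L P) := by
    rw [Set.disjoint_left]
    rintro _ hN ⟨X, hX, rfl⟩
    rw [hmemN] at hN
    simp only [hL, sub_neg] at hN
    obtain ⟨i, hi⟩ := Finite.exists_max fun i ↦ X i i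
    rcases (PosSemidef.diag_nonneg hX : 0 ≤ X i i).lt_or_eq with h | h
    · exact absurd (psd_diag_le M X hM hX h hi S hS) (not_le.2 (hN i))
    · -- a zero diagonal bounds the trace form by every positive multiple of `T`
      have h0 := hN i
      rw [← h, mul_zero] at h0
      set t := ∑ k, ∑ j, M k j * X k j
      have := psd_diag_le M X hM hX (R := t / (2 * (T + 1))) (by positivity)
        (fun j ↦ (hi j).trans (by rw [← h]; positivity)) S hS
      have h2 : T * (t / (2 * (T + 1))) < t := by
        rw [← mul_div_assoc, div_lt_iff₀ (by positivity)]
        nlinarith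
      exact absurd this (not_le.2 h2)
  obtain ⟨f, u, hfN, hfP⟩ := geometric_hahn_banach_open
    (convex_pi fun _ _ ↦ convex_Iio 0) (isOpen_set_pi Set.finite_univ fun _ _ ↦ isOpen_Iio)
    (hPconv.linear_image L) hdisj
  -- the functional `f` has nonnegative coefficients `lam`, and `u = 0` because both sets are cones
  have hu : u ≤ 0 := by
    simpa using hfP 0 ⟨0, PosSemidef.zero, map_zero L⟩
  set lam : Fin m → ℝ := fun i ↦ f (Pi.single i 1)
  have hf : ∀ x : Fin m → ℝ, f x = ∑ i, x i * lam i := by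
    intro x
    conv_lhs => rw [pi_eq_sum_univ' x]
    simp only [map_sum, map_smul, smul_eq_mul, lam]
  have hsum : 0 < ∑ i, lam i := by
    have := hfN (fun _ ↦ -1) ((hmemN _).2 fun _ ↦ by norm_num)
    rw [hf] at this
    simp only [neg_mul, one_mul, Finset.sum_neg_distrib] at this
    linarith
  have hu0 : 0 ≤ u := by
    by_contra! h
    set e := -u / (∑ i, lam i)
    have he : 0 < e := by have : 0 < -u := by linarith
                          positivity
    have := hfN (fun _ ↦ -e) ((hmemN _).2 fun _ ↦ by linarith)
    rw [hf, ← Finset.mul_sum] at this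
    have h3 : e * ∑ i, lam i = -u := by simp only [e]; field_simp
    linarith
  have hlam : ∀ i, 0 ≤ lam i := by
    intro i
    by_contra! h
    -- `t` is chosen so that `f` vanishes at the point `-(1 + t e_i)` of the negative orthant
    set t := (∑ i, lam i) / (-lam i)
    have ht : 0 < t := by have : 0 < -lam i := by linarith
                          positivity
    have := hfN (fun j ↦ -1 - t * Pi.single (M := fun _ ↦ ℝ) i 1 j) ((hmemN _).2 fun j ↦ by
      have : 0 ≤ Pi.single (M := fun _ ↦ ℝ) i 1 j := by
        rw [Pi.single_apply]; split_ifs <;> norm_num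
      nlinarith)
    rw [hf] at this
    simp only [sub_mul, neg_mul, one_mul, Finset.sum_sub_distrib, Finset.sum_neg_distrib,
      Pi.single_apply, mul_ite, ite_mul, mul_one, mul_zero, zero_mul, Finset.sum_ite_eq',
      Finset.mem_univ, if_true] at this
    have h3 : t * lam i = - ∑ i, lam i := by
      simp only [t]
      have : lam i ≠ 0 := h.ne
      field_simp
    linarith
  refine ⟨fun i ↦ T * lam i / ∑ i, lam i, fun i ↦ ?_, ?_, fun y ↦ ?_⟩
  · have := hlam i
    positivity
  · rw [← Finset.sum_div, ← Finset.mul_sum, mul_div_assoc, div_self hsum.ne', mul_one]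
  · have h := hu0.trans (hfP _ ⟨vecMulVec y (star y), posSemidef_vecMulVec_self_star y, rfl⟩)
    rw [hf] at h
    simp only [hL, vecMulVec_apply, star_trivial, sub_mul, Finset.sum_sub_distrib,
      ← Finset.mul_sum] at h
    have h2 : y ⬝ᵥ M *ᵥ y = ∑ k, ∑ j, M k j * (y k * y j) := by
      simp only [dotProduct, mulVec, Finset.mul_sum]
      exact Finset.sum_congr rfl fun k _ ↦ Finset.sum_congr rfl fun j _ ↦ by ring
    rw [h2]
    have h4 : ∑ i, T * lam i / (∑ i, lam i) * y i ^ 2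
        = (∑ i, T * (y i * y i) * lam i) / ∑ i, lam i := by
      rw [Finset.sum_div]
      exact Finset.sum_congr rfl fun i _ ↦ by ring
    rw [h4, le_div_iff₀ hsum]
    linarith

/-! ### The vector norms -/

theorem pNorm_one {k : ℕ} (x : Fin k → ℝ) : pNorm 1 x = ∑ i, |x i| := by
  simp [pNorm]

theorem pNorm_ofReal {k : ℕ} {p : ℝ} (hp : 1 ≤ p) (x : Fin k → ℝ) :
    pNorm (ENNReal.ofReal p) x = (∑ i, |x i| ^ p) ^ (1 / p) := by
  simp [pNorm, ENNReal.toReal_ofReal (zero_le_one.trans hp)]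

theorem le_pNorm_top {k : ℕ} (x : Fin k → ℝ) (i : Fin k) : x i ≤ pNorm ∞ x := by
  simp only [pNorm, if_true]
  exact (le_abs_self _).trans (le_ciSup (Set.finite_range fun i ↦ |x i|).bddAbove i)

theorem pNorm_top_nonneg {k : ℕ} (x : Fin k → ℝ) : 0 ≤ pNorm ∞ x := by
  simp only [pNorm, if_true]
  exact Real.iSup_nonneg fun i ↦ abs_nonneg _

theorem pNorm_nonneg {k : ℕ} {p : ℝ} (hp : 1 ≤ p) (x : Fin k → ℝ) :
    0 ≤ pNorm (ENNReal.ofReal p) x := by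
  rw [pNorm_ofReal hp]
  positivity

theorem pNorm_smul {k : ℕ} {p : ℝ} (hp : 1 ≤ p) {c : ℝ} (hc : 0 ≤ c) (x : Fin k → ℝ) :
    pNorm (ENNReal.ofReal p) (c • x) = c * pNorm (ENNReal.ofReal p) x := by
  have hp0 : p ≠ 0 := by linarith
  simp only [pNorm_ofReal hp, Pi.smul_apply, smul_eq_mul, abs_mul, abs_of_nonneg hc,
    Real.mul_rpow hc (abs_nonneg _), ← Finset.mul_sum]
  rw [Real.mul_rpow (by positivity) (by positivity), ← Real.rpow_mul hc,
    mul_one_div_cancel hp0, Real.rpow_one]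

theorem eq_zero_of_pNorm {k : ℕ} {p : ℝ} (hp : 1 ≤ p) {x : Fin k → ℝ}
    (h : pNorm (ENNReal.ofReal p) x = 0) : x = 0 := by
  rw [pNorm_ofReal hp, Real.rpow_eq_zero (by positivity) (by positivity),
    Finset.sum_eq_zero_iff_of_nonneg fun i _ ↦ by positivity] at h
  ext i
  have := h i (Finset.mem_univ i)
  rw [Real.rpow_eq_zero (abs_nonneg _) (by linarith)] at this
  simpa using this

theorem dotProduct_self_le_one {k : ℕ} {p : ℝ} (hp1 : 1 ≤ p) (hp2 : p < 2) {x : Fin k → ℝ}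
    (h : pNorm (ENNReal.ofReal p) x ≤ 1) : x ⬝ᵥ x ≤ 1 := by
  have hs : ∑ i, |x i| ^ p ≤ 1 := by
    by_contra! h1
    rw [pNorm_ofReal hp1] at h
    exact absurd h (not_le.2 (Real.one_lt_rpow h1 (by positivity)))
  refine le_trans (Finset.sum_le_sum fun i hi ↦ ?_) hs
  have hi1 : |x i| ≤ 1 := by
    by_contra! h1
    have h2 := Finset.single_le_sum (f := fun i ↦ |x i| ^ p) (fun j _ ↦ by positivity) hi
    have h3 := Real.one_lt_rpow h1 (show 0 < p by linarith)
    linarith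
  have : x i * x i = |x i| ^ (2 : ℝ) := by rw [Real.rpow_two, sq_abs, sq]
  rw [this]
  rcases (abs_nonneg (x i)).eq_or_lt with h0 | h0
  · rw [← h0, Real.zero_rpow (by norm_num), Real.zero_rpow (by linarith)]
  · exact Real.rpow_le_rpow_of_exponent_ge h0 hi1 hp2.le

/-- Hölder's inequality between the `p`-norm and the Euclidean norm. -/
theorem pNorm_le_sqrt {k : ℕ} {p : ℝ} (hp1 : 1 ≤ p) (hp2 : p < 2) (x : Fin k → ℝ) :
    pNorm (ENNReal.ofReal p) x ≤ (k : ℝ) ^ (1 / p - 1 / 2) * Real.sqrt (x ⬝ᵥ x) := by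
  have hp0 : 0 < p := by linarith
  have h := Real.rpow_sum_le_const_mul_sum_rpow_of_nonneg (Finset.univ : Finset (Fin k))
    (f := fun i ↦ |x i| ^ p) (p := 2 / p) (by rw [le_div_iff₀ hp0]; linarith)
    (fun i _ ↦ by positivity)
  have e1 : ∑ i, (|x i| ^ p) ^ (2 / p) = x ⬝ᵥ x := by
    refine Finset.sum_congr rfl fun i _ ↦ ?_
    rw [← Real.rpow_mul (abs_nonneg _), mul_div_cancel₀ _ hp0.ne', Real.rpow_two, sq_abs, sq]
  rw [e1, Finset.card_univ, Fintype.card_fin] at h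
  have hx : 0 ≤ x ⬝ᵥ x := e1 ▸ Finset.sum_nonneg fun i _ ↦ by positivity
  have h2 := Real.rpow_le_rpow (by positivity) h (show (0:ℝ) ≤ 1 / 2 by norm_num)
  rw [Real.mul_rpow (by positivity) hx, ← Real.rpow_mul (by positivity),
    ← Real.rpow_mul (by positivity), ← Real.sqrt_eq_rpow] at h2
  rw [pNorm_ofReal hp1]
  convert h2 using 2
  · field_simp
  · congr 1; field_simp

/-! ### The feasible set -/

section Feasible

variable {m n l : ℕ} (A : Matrix (Fin m) (Fin n) ℝ) (B : Matrix (Fin l) (Fin n) ℝ)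

theorem block_quadForm (v : Fin m → ℝ) (w : Fin l → ℝ) (y : Fin m → ℝ) (z : Fin n → ℝ) :
    Sum.elim y z ⬝ᵥ (fromBlocks (diagonal v) (-A) (-Aᵀ) (Bᵀ * diagonal w * B)) *ᵥ Sum.elim y z
      = ∑ i, v i * y i ^ 2 - 2 * (y ⬝ᵥ A *ᵥ z) + ∑ j, w j * (B *ᵥ z) j ^ 2 := by
  have h1 : y ⬝ᵥ diagonal v *ᵥ y = ∑ i, v i * y i ^ 2 := by
    simp only [dotProduct, mulVec_diagonal]
    exact Finset.sum_congr rfl fun i _ ↦ by ring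
  have h2 : z ⬝ᵥ (Bᵀ * diagonal w * B) *ᵥ z = ∑ j, w j * (B *ᵥ z) j ^ 2 := by
    rw [← mulVec_mulVec, ← mulVec_mulVec, dotProduct_mulVec, vecMul_transpose]
    simp only [dotProduct, mulVec_diagonal]
    exact Finset.sum_congr rfl fun i _ ↦ by ring
  have h3 : z ⬝ᵥ Aᵀ *ᵥ y = y ⬝ᵥ A *ᵥ z := by
    rw [mulVec_transpose, dotProduct_comm, ← dotProduct_mulVec]
  rw [fromBlocks_mulVec, sumElim_dotProduct_sumElim]
  simp only [Sum.elim_comp_inl, Sum.elim_comp_inr, dotProduct_add, neg_mulVec, dotProduct_neg,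
    h1, h2, h3]
  ring

/-- Weak duality: the quadratic form of the block matrix is nonnegative at `(sign (A z), z)`. -/
theorem sum_abs_le_of_mem_Kset {p : ℝ} (hp1 : 1 ≤ p) (hp2 : p < 2) {vw}
    (h : vw ∈ Kset A B) (z : Fin n → ℝ) (hz : pNorm (ENNReal.ofReal p) (B *ᵥ z) ≤ 1) :
    ∑ i, |(A *ᵥ z) i| ≤ 1 / 2 * (pNorm 1 vw.1 + pNorm ∞ vw.2) := by
  have h1 := PosSemidef.dotProduct_mulVec_nonneg h
    (Sum.elim (fun i ↦ Real.sign ((A *ᵥ z) i)) z)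
  rw [star_trivial, block_quadForm] at h1
  have h2 : (fun i ↦ Real.sign ((A *ᵥ z) i)) ⬝ᵥ A *ᵥ z = ∑ i, |(A *ᵥ z) i| :=
    Finset.sum_congr rfl fun i _ ↦ realSign_mul_self _
  have h3 : ∑ i, vw.1 i * Real.sign ((A *ᵥ z) i) ^ 2 ≤ pNorm 1 vw.1 := by
    rw [pNorm_one]
    refine Finset.sum_le_sum fun i _ ↦ ?_
    have := abs_realSign_le ((A *ᵥ z) i)
    have h5 : Real.sign ((A *ᵥ z) i) ^ 2 ≤ 1 := (sq_le_one_iff_abs_le_one _).2 this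
    nlinarith [le_abs_self (vw.1 i), abs_nonneg (vw.1 i), sq_nonneg (Real.sign ((A *ᵥ z) i))]
  have h4 : ∑ j, vw.2 j * (B *ᵥ z) j ^ 2 ≤ pNorm ∞ vw.2 := by
    calc _ ≤ ∑ j, pNorm ∞ vw.2 * ((B *ᵥ z) j * (B *ᵥ z) j) := by
          refine Finset.sum_le_sum fun j _ ↦ ?_
          rw [← sq]
          exact mul_le_mul_of_nonneg_right (le_pNorm_top _ j) (sq_nonneg _)
      _ = pNorm ∞ vw.2 * (B *ᵥ z ⬝ᵥ B *ᵥ z) := by rw [← Finset.mul_sum]; rfl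
      _ ≤ _ := mul_le_of_le_one_right (pNorm_top_nonneg _) (dotProduct_self_le_one hp1 hp2 hz)
  rw [h2] at h1
  linarith

/-- The vector `u = (Bᵀ B)⁻¹ Aᵀ y` represents the functional `z ↦ yᵀ A z` in the inner product
`(x, z) ↦ ⟨B x, B z⟩`. -/
theorem dual_spec (hB : Function.Injective B.mulVec) (y : Fin m → ℝ) (z : Fin n → ℝ) :
    y ⬝ᵥ A *ᵥ z = B *ᵥ ((Bᵀ * B)⁻¹ *ᵥ Aᵀ *ᵥ y) ⬝ᵥ B *ᵥ z := by
  have hQ : (Bᵀ * B).PosDef := by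
    simpa [conjTranspose_eq_transpose_of_trivial] using PosDef.conjTranspose_mul_self B hB
  have hdet : IsUnit (Bᵀ * B).det := hQ.det_pos.ne'.isUnit
  have hu : (Bᵀ * B) *ᵥ ((Bᵀ * B)⁻¹ *ᵥ Aᵀ *ᵥ y) = Aᵀ *ᵥ y := by
    rw [mulVec_mulVec, mul_nonsing_inv _ hdet, one_mulVec]
  rw [dotProduct_mulVec (B *ᵥ _), ← mulVec_transpose B, mulVec_mulVec, hu, mulVec_transpose,
    dotProduct_mulVec]

theorem quad_eq (hB : Function.Injective B.mulVec) (y : Fin m → ℝ) :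
    y ⬝ᵥ (A * (Bᵀ * B)⁻¹ * Aᵀ) *ᵥ y
      = B *ᵥ ((Bᵀ * B)⁻¹ *ᵥ Aᵀ *ᵥ y) ⬝ᵥ B *ᵥ ((Bᵀ * B)⁻¹ *ᵥ Aᵀ *ᵥ y) := by
  rw [← dual_spec A B hB, mulVec_mulVec, mulVec_mulVec, Matrix.mul_assoc]

/-- If `A (Bᵀ B)⁻¹ Aᵀ ≤ Diag v`, then `(v / c, c · 1)` is feasible: with `u` as in `dual_spec`, the
quadratic form of the block matrix at `(y, z)` is at least `‖B u - c B z‖₂² / c`. -/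
theorem mem_Kset_of_diag (hB : Function.Injective B.mulVec) (v : Fin m → ℝ)
    (hv : ∀ y : Fin m → ℝ, y ⬝ᵥ (A * (Bᵀ * B)⁻¹ * Aᵀ) *ᵥ y ≤ ∑ i, v i * y i ^ 2)
    {c : ℝ} (hc : 0 < c) : ((fun i ↦ v i / c, fun _ ↦ c) : (Fin m → ℝ) × (Fin l → ℝ)) ∈ Kset A B := by
  refine PosSemidef.of_dotProduct_mulVec_nonneg ?_ fun x ↦ ?_
  · refine IsHermitian.fromBlocks (isHermitian_diagonal _) ?_ ?_
    · simp
    · rw [IsHermitian]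
      simp [Matrix.mul_assoc]
  · obtain ⟨y, z, rfl⟩ : ∃ y z, x = Sum.elim y z := ⟨_, _, (Sum.elim_comp_inl_inr x).symm⟩
    rw [star_trivial, block_quadForm, dual_spec A B hB]
    have h1 := hv y
    rw [quad_eq A B hB] at h1
    set a := B *ᵥ ((Bᵀ * B)⁻¹ *ᵥ Aᵀ *ᵥ y)
    set b := B *ᵥ z
    have h2 : ∑ i, v i / c * y i ^ 2 = (∑ i, v i * y i ^ 2) / c := by
      rw [Finset.sum_div]
      exact Finset.sum_congr rfl fun i _ ↦ by ring
    have h3 : 0 ≤ ∑ j, (a j - c * b j) ^ 2 / c :=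
      Finset.sum_nonneg fun j _ ↦ by positivity
    have h4 : ∑ j, (a j - c * b j) ^ 2 / c
        = (a ⬝ᵥ a) / c - 2 * (a ⬝ᵥ b) + ∑ j, c * b j ^ 2 := by
      simp only [dotProduct, Finset.sum_div, Finset.mul_sum, ← Finset.sum_sub_distrib,
        ← Finset.sum_add_distrib]
      refine Finset.sum_congr rfl fun j _ ↦ ?_
      field_simp
      ring
    have h5 : (a ⬝ᵥ a) / c ≤ (∑ i, v i * y i ^ 2) / c := by gcongr
    simp only [h2]
    linarith

theorem exists_mem_Kset (hB : Function.Injective B.mulVec) {S c : ℝ} (hc : 0 < c)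
    (hS : ∀ s : Fin m → ℝ, (∀ i, |s i| ≤ 1) → s ⬝ᵥ (A * (Bᵀ * B)⁻¹ * Aᵀ) *ᵥ s ≤ S) :
    ∃ vw ∈ Kset A B, pNorm 1 vw.1 + pNorm ∞ vw.2 ≤ Real.pi / 2 * S / c + c := by
  have hQ : (Bᵀ * B).PosDef := by
    simpa [conjTranspose_eq_transpose_of_trivial] using PosDef.conjTranspose_mul_self B hB
  have hM : (A * (Bᵀ * B)⁻¹ * Aᵀ).PosSemidef := by
    simpa [conjTranspose_eq_transpose_of_trivial] using
      hQ.inv.posSemidef.mul_mul_conjTranspose_same A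
  obtain ⟨v, hv0, hvS, hv⟩ := exists_diag _ hM S hS
  refine ⟨_, mem_Kset_of_diag A B hB v hv hc, add_le_add ?_ ?_⟩
  · rw [pNorm_one]
    simp only [abs_of_nonneg (div_nonneg (hv0 _) hc.le), ← Finset.sum_div]
    gcongr
  · simp only [pNorm, if_true]
    exact Real.iSup_le (fun _ ↦ (abs_of_pos hc).le) hc.le

end Feasible

/-- Let `A ∈ ℝ^{m×n}`, `B ∈ ℝ^{l×n}` injective, and `p ∈ [1,2)`.  Then
`‖A‖_{p↦1;B} ≤ (1/2)·min_{(v,w) ∈ K} (‖v‖_1 + ‖w‖_∞) ≤ √(π/2)·l^{1/p − 1/2}·‖A‖_{p↦1;B}`. -/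
theorem stmt19 (m n l : ℕ)
    (A : Matrix (Fin m) (Fin n) ℝ) (B : Matrix (Fin l) (Fin n) ℝ)
    (hB : Function.Injective B.mulVec)
    (p : ℝ) (hp1 : 1 ≤ p) (hp2 : p < 2) :
    gnorm A B (ENNReal.ofReal p) 1 ≤
      (1 / 2) * sInf {r : ℝ | ∃ vw ∈ Kset A B, r = pNorm 1 vw.1 + pNorm ∞ vw.2} ∧
    (1 / 2) * sInf {r : ℝ | ∃ vw ∈ Kset A B, r = pNorm 1 vw.1 + pNorm ∞ vw.2} ≤
      Real.sqrt (Real.pi / 2) * (l : ℝ) ^ (1 / p - 1 / 2) * gnorm A B (ENNReal.ofReal p) 1 := by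
  set V := {r : ℝ | ∃ vw ∈ Kset A B, r = pNorm 1 vw.1 + pNorm ∞ vw.2} with hV
  set U := {r : ℝ | ∃ v : Fin n → ℝ, pNorm (ENNReal.ofReal p) (B.mulVec v) ≤ 1 ∧
    r = pNorm 1 (A.mulVec v)}
  have hgU : gnorm A B (ENNReal.ofReal p) 1 = sSup U := rfl
  have hweak : ∀ r ∈ U, ∀ t ∈ V, r ≤ 1 / 2 * t := by
    rintro _ ⟨z, hz, rfl⟩ _ ⟨vw, hvw, rfl⟩
    rw [pNorm_one]
    exact sum_abs_le_of_mem_Kset A B hp1 hp2 hvw z hz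
  have hVne : V.Nonempty := by
    set M := A * (Bᵀ * B)⁻¹ * Aᵀ with hM
    obtain ⟨vw, hvw, _⟩ := exists_mem_Kset A B hB one_pos (S := ∑ i, ∑ j, |M i j|) fun s hs ↦ by
      simp only [dotProduct, mulVec, Finset.mul_sum]
      refine Finset.sum_le_sum fun i _ ↦ Finset.sum_le_sum fun j _ ↦ ?_
      refine (le_abs_self _).trans ?_
      rw [abs_mul, abs_mul]
      have h1 := mul_le_one₀ (hs i) (abs_nonneg _) (hs j)
      nlinarith [abs_nonneg (M i j)]
    exact ⟨_, vw, hvw, rfl⟩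
  have hVbdd : BddBelow V := by
    refine ⟨0, ?_⟩
    rintro _ ⟨vw, _, rfl⟩
    rw [pNorm_one]
    have := pNorm_top_nonneg vw.2
    positivity
  have hUne : U.Nonempty := by
    refine ⟨_, 0, ?_, rfl⟩
    simp [pNorm_ofReal hp1, Real.zero_rpow (show p ≠ 0 by linarith),
      Real.zero_rpow (show p⁻¹ ≠ 0 by positivity)]
  have hUbdd : BddAbove U := by
    obtain ⟨t, ht⟩ := hVne
    exact ⟨1 / 2 * t, fun r hr ↦ hweak r hr t ht⟩
  rw [hgU]
  refine ⟨csSup_le hUne fun r hr ↦ ?_, ?_⟩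
  · have : 2 * r ≤ sInf V := le_csInf hVne fun t ht ↦ by linarith [hweak r hr t ht]
    linarith
  have hg0 : 0 ≤ sSup U := Real.sSup_nonneg fun r hr ↦ by
    obtain ⟨z, _, rfl⟩ := hr
    rw [pNorm_one]
    positivity
  have hhom : ∀ z, ∑ i, |(A *ᵥ z) i| ≤ sSup U * pNorm (ENNReal.ofReal p) (B *ᵥ z) := by
    intro z
    rcases (pNorm_nonneg hp1 (B *ᵥ z)).eq_or_lt with h | h
    · have hz : z = 0 := hB (by rw [eq_zero_of_pNorm hp1 h.symm, mulVec_zero])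
      rw [← h, hz]
      simp
    · set N := pNorm (ENNReal.ofReal p) (B *ᵥ z)
      have h1 := le_csSup hUbdd ⟨N⁻¹ • z, by
        rw [mulVec_smul, pNorm_smul hp1 (by positivity), inv_mul_cancel₀ h.ne'], rfl⟩
      rw [pNorm_one, mulVec_smul] at h1
      simp only [Pi.smul_apply, smul_eq_mul, abs_mul, ← Finset.mul_sum,
        abs_of_pos (inv_pos.2 h)] at h1
      rwa [inv_mul_le_iff₀ h, mul_comm] at h1
  set G := (l : ℝ) ^ (1 / p - 1 / 2) * sSup U with hG
  have hG0 : 0 ≤ G := by positivity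
  have hGle : ∀ z, ∑ i, |(A *ᵥ z) i| ≤ G * Real.sqrt (B *ᵥ z ⬝ᵥ B *ᵥ z) := fun z ↦
    calc _ ≤ _ := hhom z
      _ ≤ sSup U * ((l : ℝ) ^ (1 / p - 1 / 2) * Real.sqrt (B *ᵥ z ⬝ᵥ B *ᵥ z)) := by
        gcongr
        exact pNorm_le_sqrt hp1 hp2 _
      _ = _ := by rw [hG]; ring
  have hS : ∀ s : Fin m → ℝ, (∀ i, |s i| ≤ 1) → s ⬝ᵥ (A * (Bᵀ * B)⁻¹ * Aᵀ) *ᵥ s ≤ G ^ 2 := by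
    intro s hs
    rw [quad_eq A B hB]
    set u := (Bᵀ * B)⁻¹ *ᵥ Aᵀ *ᵥ s
    set q := B *ᵥ u ⬝ᵥ B *ᵥ u with hq
    have hq0 : 0 ≤ q := Finset.sum_nonneg fun i _ ↦ mul_self_nonneg _
    have h1 : q ≤ G * Real.sqrt q := by
      refine le_trans ?_ (hGle u)
      rw [hq, ← dual_spec A B hB]
      refine Finset.sum_le_sum fun i _ ↦ (le_abs_self _).trans ?_
      rw [abs_mul]
      exact mul_le_of_le_one_left (abs_nonneg _) (hs i)
    have h2 := Real.sq_sqrt hq0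
    have h3 := Real.sqrt_nonneg q
    nlinarith [sq_nonneg (Real.sqrt q - G)]
  rw [mul_assoc, ← hG]
  set k := Real.sqrt (Real.pi / 2) with hk
  have hk0 : 0 < k := Real.sqrt_pos.2 (by positivity)
  have hkk : Real.pi / 2 = k * k := (Real.mul_self_sqrt (by positivity)).symm
  -- `G` may vanish, so the optimal scaling `c = k * G` is perturbed to be positive
  refine le_of_forall_pos_le_add fun ε hε ↦ ?_
  have hc : 0 < k * G + ε := by positivity
  obtain ⟨vw, hvw, hle⟩ := exists_mem_Kset A B hB hc hS
  have h1 := csInf_le hVbdd ⟨vw, hvw, rfl⟩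
  have h2 : Real.pi / 2 * G ^ 2 / (k * G + ε) ≤ k * G + ε := by
    rw [div_le_iff₀ hc, hkk]
    have : 0 ≤ k * G := by positivity
    nlinarith
  linarith
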